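/- The series ∑_{n=1}^∞ ζ(2n)/(n(2n+1)(2n+3)·16^n) equals 3ζ(3)/(8π²) + 8β(4)/π³ + (1/3)·log(π/2) - 4/9, where β is the Dirichlet beta function. -/

import Mathlib

open Real

noncomputable def dirichletBeta (s : ℕ) : ℝ := ∑' n : ℕ, (-1) ^ n / (2 * (n : ℝ) + 1) ^ s

open Filter Topology MeasureTheory

/-- Real zeta values. -/
noncomputable def ZZ (m : ℕ) : ℝ := ∑' k : ℕ, 1 / ((k : ℝ) + 1) ^ m

lemma ZZ_summable (m : ℕ) (hm : 1 < m) : Summable (fun k : ℕ => 1 / ((k : ℝ) + 1) ^ m) := by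
  have := (summable_nat_add_iff 1).2 (Real.summable_one_div_nat_pow.2 hm)
  simpa using this

lemma ZZ_hasSum (m : ℕ) (hm : 1 < m) : HasSum (fun k : ℕ => 1 / ((k : ℝ) + 1) ^ m) (ZZ m) :=
  (ZZ_summable m hm).hasSum

lemma ZZ_hasSum' (m : ℕ) (hm : 1 < m) : HasSum (fun k : ℕ => 1 / (k : ℝ) ^ m) (ZZ m) := by
  have h := ZZ_hasSum m hm
  have := (hasSum_nat_add_iff' (f := fun k : ℕ => 1 / (k : ℝ) ^ m) 1 (g := ZZ m)).1
  apply this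
  have hm0 : m ≠ 0 := by omega
  simpa [hm0] using h

lemma ZZ_zeta (m : ℕ) (hm : 1 < m) : riemannZeta m = (ZZ m : ℂ) := by
  rw [zeta_nat_eq_tsum_of_gt_one hm, ← (ZZ_hasSum' m hm).tsum_eq]
  push_cast
  rfl

lemma ZZ_nonneg (m : ℕ) : 0 ≤ ZZ m := tsum_nonneg (fun k => by positivity)

lemma partA (x : ℝ) (h0 : 0 < x) (h1 : x < 1) :
    HasSum (fun n : ℕ => ZZ (2 * (n + 1)) * x ^ (2 * (n + 1)) / (n + 1))
      (log (π * x) - log (sin (π * x))) := by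
  have hy0 : ∀ k : ℕ, 0 ≤ x ^ 2 / ((k : ℝ) + 1) ^ 2 := fun k => by positivity
  have hy1 : ∀ k : ℕ, x ^ 2 / ((k : ℝ) + 1) ^ 2 < 1 := fun k => by
    rw [div_lt_one (by positivity)]
    have : (0 : ℝ) ≤ k := k.cast_nonneg
    nlinarith
  have hk : ∀ k : ℕ, HasSum (fun n : ℕ => (x ^ 2 / ((k : ℝ) + 1) ^ 2) ^ (n + 1) / ((n : ℝ) + 1))
      (-log (1 - x ^ 2 / ((k : ℝ) + 1) ^ 2)) := fun k =>
    hasSum_pow_div_log_of_abs_lt_one (by rw [abs_of_nonneg (hy0 k)]; exact hy1 k)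
  have hs : 0 < sin (π * x) := sin_pos_of_pos_of_lt_pi (by positivity) (by nlinarith [pi_pos])
  have hsum : HasSum (fun k : ℕ => -log (1 - x ^ 2 / ((k : ℝ) + 1) ^ 2))
      (log (π * x) - log (sin (π * x))) := by
    rw [hasSum_iff_tendsto_nat_of_nonneg]
    · have h := Real.tendsto_euler_sin_prod x
      have h2 := (h.log hs.ne').const_sub (log (π * x))
      refine h2.congr fun n => ?_
      have hne : ∀ k ∈ Finset.range n, (1 - x ^ 2 / ((k : ℝ) + 1) ^ 2) ≠ 0 := fun k _ => by
        have := hy1 k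
        linarith
      rw [log_mul (by positivity) (Finset.prod_ne_zero_iff.2 hne), log_prod hne,
        Finset.sum_neg_distrib]
      ring
    · intro k
      have := log_nonpos (x := 1 - x ^ 2 / ((k : ℝ) + 1) ^ 2) (by linarith [hy1 k]) (by linarith [hy0 k])
      linarith
  set f : ℕ × ℕ → ℝ := fun p => (x ^ 2 / ((p.1 : ℝ) + 1) ^ 2) ^ (p.2 + 1) / ((p.2 : ℝ) + 1) with hf
  have hfn : 0 ≤ f := fun p => by
    simp only [hf, Pi.zero_apply]; positivity
  have hfs : Summable f := by
    rw [summable_prod_of_nonneg hfn]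
    refine ⟨fun k => (hk k).summable, ?_⟩
    refine hsum.summable.congr fun k => ?_
    exact (hk k).tsum_eq.symm
  have hft : HasSum f (log (π * x) - log (sin (π * x))) := by
    have h1 := hfs.hasSum
    have h2 := h1.prod_fiberwise hk
    rw [hsum.unique h2]
    exact h1
  have hft' := (Equiv.prodComm ℕ ℕ).hasSum_iff.2 hft
  refine hft'.prod_fiberwise fun n => ?_
  have h := (ZZ_hasSum (2 * (n + 1)) (by omega)).mul_right (x ^ (2 * (n + 1)) / ((n : ℝ) + 1))
  rw [← mul_div_assoc] at h
  refine h.congr_fun ?_ |> fun h => h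
  intro k
  simp only [hf, Function.comp, Equiv.prodComm_apply, Prod.swap]
  rw [div_pow, ← pow_mul, ← pow_mul]
  ring

lemma int_poly (n : ℕ) : ∫ t in (0:ℝ)..1, (1 - t ^ 2) * t ^ (2 * (n + 1)) =
    2 / ((2 * (n : ℝ) + 3) * (2 * (n : ℝ) + 5)) := by
  have : ∀ t : ℝ, (1 - t ^ 2) * t ^ (2 * (n + 1)) = t ^ (2 * n + 2) - t ^ (2 * n + 4) := fun t => by
    ring
  simp_rw [this]
  rw [intervalIntegral.integral_sub (by simp) (by simp)]
  simp only [integral_pow]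
  push_cast
  simp
  field_simp
  ring

lemma partB : HasSum (fun n : ℕ => ZZ (2 * (n + 1)) /
        ((n + 1) * (2 * n + 3) * (2 * n + 5) * 16 ^ (n + 1)))
    (1 / 2 * ∫ t in (0:ℝ)..1, (1 - t ^ 2) * (log (π * (t / 4)) - log (sin (π * (t / 4))))) := by
  have key : HasSum (fun n : ℕ => ∫ t in (0:ℝ)..1,
      (1 - t ^ 2) * (ZZ (2 * (n + 1)) * (t / 4) ^ (2 * (n + 1)) / (n + 1)))
      (∫ t in (0:ℝ)..1, (1 - t ^ 2) * (log (π * (t / 4)) - log (sin (π * (t / 4))))) := by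
    apply intervalIntegral.hasSum_integral_of_dominated_convergence
      (fun n _ => ZZ (2 * (n + 1)) * (1 / 4) ^ (2 * (n + 1)) / ((n : ℝ) + 1))
    · intro n
      exact Continuous.aestronglyMeasurable (by fun_prop)
    · intro n
      refine Eventually.of_forall fun t ht => ?_
      rw [Set.uIoc_of_le zero_le_one] at ht
      obtain ⟨ht0, ht1⟩ := ht
      have hz := ZZ_nonneg (2 * (n + 1))
      have h2 : 0 ≤ 1 - t ^ 2 := by nlinarith
      rw [Real.norm_of_nonneg (by positivity)]
      have h3 : ZZ (2 * (n + 1)) * (t / 4) ^ (2 * (n + 1)) / ((n : ℝ) + 1) ≤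
        ZZ (2 * (n + 1)) * (1 / 4) ^ (2 * (n + 1)) / ((n : ℝ) + 1) := by gcongr
      have h4 : 0 ≤ ZZ (2 * (n + 1)) * (t / 4) ^ (2 * (n + 1)) / ((n : ℝ) + 1) := by positivity
      nlinarith
    · exact Eventually.of_forall fun t _ => (partA (1 / 4) (by norm_num) (by norm_num)).summable
    · simp
    · refine Eventually.of_forall fun t ht => ?_
      rw [Set.uIoc_of_le zero_le_one] at ht
      exact (partA (t / 4) (by linarith [ht.1]) (by linarith [ht.2])).mul_left _
  refine (key.mul_left (1 / 2)).congr_fun ?_ |> fun h => h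
  intro n
  have : ∀ t : ℝ, (1 - t ^ 2) * (ZZ (2 * (n + 1)) * (t / 4) ^ (2 * (n + 1)) / (n + 1)) =
    (ZZ (2 * (n + 1)) / (16 ^ (n + 1) * (n + 1))) * ((1 - t ^ 2) * t ^ (2 * (n + 1))) := fun t => by
    rw [div_pow, pow_mul 4, show (4 : ℝ) ^ 2 = 16 by norm_num]
    field_simp
  simp_rw [this]
  rw [intervalIntegral.integral_const_mul, int_poly]
  field_simp

lemma partC : ∫ t in (0:ℝ)..1, (1 - t ^ 2) * log t = -8 / 9 := by
  have hint : IntervalIntegrable (fun t : ℝ => (1 - t ^ 2) * log t) volume 0 1 :=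
    intervalIntegral.intervalIntegrable_log'.continuousOn_mul (by fun_prop)
  have := intervalIntegral.integral_eq_sub_of_hasDerivAt_of_le (a := 0) (b := 1)
    (f := fun t : ℝ => (t * log t) - t - t ^ 2 * (t * log t) / 3 + t ^ 3 / 9)
    (f' := fun t : ℝ => (1 - t ^ 2) * log t) zero_le_one ?_ ?_ hint
  · rw [this]; norm_num
  · have := Real.continuous_mul_log
    apply Continuous.continuousOn
    fun_prop
  · intro t ht
    have h0 : t ≠ 0 := ht.1.ne'
    have h1 := (hasDerivAt_id t).mul (Real.hasDerivAt_log h0)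
    have h2 := ((h1.sub (hasDerivAt_id t)).sub ((((hasDerivAt_pow 2 t)).mul h1).div_const 3)).add
      ((hasDerivAt_pow 3 t).div_const 9)
    refine h2.congr_deriv ?_
    simp
    field_simp
    ring
/-- The cosine moments. -/
noncomputable def cc (k : ℕ) : ℝ :=
  -2 * cos (k * (π / 2)) / (k * (π / 2)) ^ 2 + 2 * sin (k * (π / 2)) / (k * (π / 2)) ^ 3

lemma int_cos (k : ℕ) (hk : k ≠ 0) :
    ∫ t in (0:ℝ)..1, (1 - t ^ 2) * cos (k * (π / 2 * t)) = cc k := by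
  have ha : (k : ℝ) * (π / 2) ≠ 0 := by positivity
  unfold cc
  set a : ℝ := k * (π / 2) with hadef
  have e : ∀ t : ℝ, (1 - t ^ 2) * cos (k * (π / 2 * t)) = (1 - t ^ 2) * cos (a * t) := fun t => by
    rw [hadef, mul_assoc]
  simp_rw [e]
  rw [intervalIntegral.integral_eq_sub_of_hasDerivAt
    (f := fun t : ℝ => (1 - t ^ 2) * sin (a * t) / a - 2 * t * cos (a * t) / a ^ 2
      + 2 * sin (a * t) / a ^ 3)]
  · simp
    ring
  · intro t _
    have hl : HasDerivAt (fun t : ℝ => a * t) a t := by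
      simpa using (hasDerivAt_id t).const_mul a
    have hs := hl.sin
    have hc := hl.cos
    have h2 := ((((hasDerivAt_pow 2 t).const_sub 1).mul hs).div_const a).sub
      ((((hasDerivAt_id t).const_mul 2).mul hc).div_const (a ^ 2)) |>.add
      ((hs.const_mul 2).div_const (a ^ 3))
    refine h2.congr_deriv ?_
    simp
    field_simp
    ring
  · exact Continuous.intervalIntegrable (by fun_prop) _ _

lemma normsq_aux (r θ : ℝ) : ‖(1 : ℂ) - r * Complex.exp (θ * Complex.I)‖ ^ 2 =
    1 - 2 * r * cos θ + r ^ 2 := by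
  rw [Complex.sq_norm, Complex.normSq_apply]
  simp [Complex.exp_re, Complex.exp_im]
  nlinarith [sin_sq_add_cos_sq θ]

lemma fourier_log (r θ : ℝ) (h0 : 0 ≤ r) (h1 : r < 1) :
    HasSum (fun k : ℕ => r ^ k * cos (k * θ) / k) (-(1 / 2 * log (1 - 2 * r * cos θ + r ^ 2))) := by
  have hz : ‖(r : ℂ) * Complex.exp (θ * Complex.I)‖ < 1 := by
    rw [norm_mul, Complex.norm_exp_ofReal_mul_I]
    simpa [abs_of_nonneg h0] using h1
  have h := Complex.hasSum_re (Complex.hasSum_taylorSeries_neg_log hz)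
  rw [Complex.neg_re, Complex.log_re] at h
  rw [← normsq_aux, log_pow]
  convert h using 1
  · funext k
    rw [mul_pow, ← Complex.exp_nat_mul, ← Complex.ofReal_pow, Complex.div_natCast_re,
      Complex.re_ofReal_mul]
    congr 2
    rw [show (k : ℂ) * (θ * Complex.I) = ((k * θ : ℝ) : ℂ) * Complex.I by push_cast; ring,
      Complex.exp_ofReal_mul_I_re]
  · push_cast; ring

lemma partD_r (r : ℝ) (h0 : 0 ≤ r) (h1 : r < 1) :
    HasSum (fun k : ℕ => r ^ k * (cc k / k))
      (∫ t in (0:ℝ)..1, (1 - t ^ 2) * -(1 / 2 * log (1 - 2 * r * cos (π / 2 * t) + r ^ 2))) := by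
  have key : HasSum (fun k : ℕ => ∫ t in (0:ℝ)..1,
      (1 - t ^ 2) * (r ^ k * cos (k * (π / 2 * t)) / k))
      (∫ t in (0:ℝ)..1, (1 - t ^ 2) * -(1 / 2 * log (1 - 2 * r * cos (π / 2 * t) + r ^ 2))) := by
    apply intervalIntegral.hasSum_integral_of_dominated_convergence (fun k _ => r ^ k)
    · intro n
      exact Continuous.aestronglyMeasurable (by fun_prop)
    · intro k
      refine Eventually.of_forall fun t ht => ?_
      rw [Set.uIoc_of_le zero_le_one] at ht
      obtain ⟨ht0, ht1⟩ := ht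
      rcases Nat.eq_zero_or_pos k with rfl | hk
      · simp
      have hk1 : (1 : ℝ) ≤ k := by exact_mod_cast hk
      rw [norm_mul, norm_div, norm_mul, Real.norm_of_nonneg (pow_nonneg h0 k), Real.norm_natCast,
        Real.norm_of_nonneg (show 0 ≤ 1 - t ^ 2 by nlinarith), Real.norm_eq_abs]
      have hr := pow_nonneg h0 k
      have hc := abs_cos_le_one (k * (π / 2 * t))
      have h3 : r ^ k * |cos (k * (π / 2 * t))| / k ≤ r ^ k := by
        rw [div_le_iff₀ (by linarith)]
        nlinarith [mul_le_mul_of_nonneg_left hc hr]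
      have h4 : 0 ≤ r ^ k * |cos (k * (π / 2 * t))| / k := by positivity
      nlinarith
    · exact Eventually.of_forall fun t _ => summable_geometric_of_lt_one h0 h1
    · simp
    · exact Eventually.of_forall fun t _ => (fourier_log r _ h0 h1).mul_left _
  refine key.congr_fun ?_ |> fun h => h
  intro k
  rcases Nat.eq_zero_or_pos k with rfl | hk
  · simp
  rw [← int_cos k hk.ne', ← intervalIntegral.integral_div, ← intervalIntegral.integral_const_mul]
  congr 1
  funext t
  ring

lemma cc_bound (k : ℕ) : |cc k / k| ≤ 4 * (1 / (k : ℝ) ^ 2) := by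
  rcases Nat.eq_zero_or_pos k with rfl | hk
  · simp
  have hk1 : (1 : ℝ) ≤ k := by exact_mod_cast hk
  unfold cc
  have hp : (1 : ℝ) ≤ π / 2 := by linarith [pi_gt_three]
  have hak : (k : ℝ) ≤ k * (π / 2) := by nlinarith
  set a : ℝ := k * (π / 2)
  have ha1 : 1 ≤ a := by linarith
  rw [abs_div, Nat.abs_cast]
  have b1 : |-2 * cos a / a ^ 2| ≤ 2 * (1 / (k : ℝ) ^ 2) := by
    rw [abs_div, abs_mul, abs_of_pos (show 0 < a ^ 2 by positivity)]
    calc |(-2 : ℝ)| * |cos a| / a ^ 2 ≤ 2 * 1 / (k : ℝ) ^ 2 := by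
          gcongr
          · norm_num
          · exact abs_cos_le_one a
      _ = _ := by ring
  have b2 : |2 * sin a / a ^ 3| ≤ 2 * (1 / (k : ℝ) ^ 2) := by
    rw [abs_div, abs_mul, abs_of_pos (show 0 < a ^ 3 by positivity)]
    calc |(2 : ℝ)| * |sin a| / a ^ 3 ≤ 2 * 1 / (k : ℝ) ^ 2 := by
          gcongr
          · norm_num
          · exact abs_sin_le_one a
          · calc (k : ℝ) ^ 2 ≤ a ^ 2 := by gcongr
              _ ≤ a ^ 3 := pow_le_pow_right₀ ha1 (by norm_num)
      _ = _ := by ring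
  calc _ ≤ |-2 * cos a / a ^ 2 + 2 * sin a / a ^ 3| := div_le_self (abs_nonneg _) hk1
    _ ≤ _ := (abs_add_le _ _).trans (by linarith)

lemma cc_summable : Summable (fun k : ℕ => cc k / k) :=
  Summable.of_norm_bounded ((Real.summable_one_div_nat_pow.2 one_lt_two).mul_left 4) cc_bound

lemma partD : ∫ t in (0:ℝ)..1, (1 - t ^ 2) * -(log (2 * sin (π * (t / 4)))) = ∑' k : ℕ, cc k / k := by
  have T1 : Tendsto (fun r : ℝ => ∑' k : ℕ, r ^ k * (cc k / k)) (𝓝[<] 1) (𝓝 (∑' k : ℕ, cc k / k)) := by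
    refine tendsto_tsum_of_dominated_convergence
      ((Real.summable_one_div_nat_pow.2 one_lt_two).mul_left 4) ?_ ?_
    · intro k
      have : Continuous fun r : ℝ => r ^ k * (cc k / k) := by fun_prop
      have h := (this.tendsto 1).mono_left (nhdsWithin_le_nhds (s := Set.Iio 1))
      simpa using h
    · filter_upwards [Ioo_mem_nhdsLT (zero_lt_one (α := ℝ))] with r hr k
      rw [norm_mul, Real.norm_of_nonneg (pow_nonneg hr.1.le k)]
      have h1 := cc_bound k
      have h2 : r ^ k ≤ 1 := pow_le_one₀ hr.1.le hr.2.le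
      calc _ ≤ 1 * |cc k / k| := by
            rw [Real.norm_eq_abs]; gcongr
        _ ≤ _ := by linarith
  have T2 : Tendsto (fun r : ℝ => ∫ t in (0:ℝ)..1,
      (1 - t ^ 2) * -(1 / 2 * log (1 - 2 * r * cos (π / 2 * t) + r ^ 2))) (𝓝[<] 1)
      (𝓝 (∫ t in (0:ℝ)..1, (1 - t ^ 2) * -(log (2 * sin (π * (t / 4)))))) := by
    apply intervalIntegral.tendsto_integral_filter_of_dominated_convergence
      (fun t => log 4 + 2 * |log (sin (π / 2 * t))|)
    · refine Eventually.of_forall fun r => Measurable.aestronglyMeasurable ?_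
      fun_prop
    · filter_upwards [Ioo_mem_nhdsLT (zero_lt_one (α := ℝ))] with r hr
      refine Eventually.of_forall fun t ht => ?_
      rw [Set.uIoc_of_le zero_le_one] at ht
      obtain ⟨ht0, ht1⟩ := ht
      have hs : 0 < sin (π / 2 * t) :=
        sin_pos_of_pos_of_lt_pi (by positivity) (by nlinarith [pi_pos])
      have hsc := sin_sq_add_cos_sq (π / 2 * t)
      have hcc := neg_one_le_cos (π / 2 * t)
      set u := 1 - 2 * r * cos (π / 2 * t) + r ^ 2 with hu
      have hu1 : sin (π / 2 * t) ^ 2 ≤ u := by nlinarith [sq_nonneg (r - cos (π / 2 * t))]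
      have hu2 : u ≤ 4 := by nlinarith [hr.1, hr.2]
      have hu0 : 0 < u := lt_of_lt_of_le (by positivity) hu1
      have l1 : log u ≤ log 4 := log_le_log hu0 hu2
      have l2 : 2 * log (sin (π / 2 * t)) ≤ log u := by
        have := log_le_log (by positivity) hu1
        rwa [log_pow] at this
      have l3 : |log u| ≤ log 4 + 2 * |log (sin (π / 2 * t))| := by
        have := neg_abs_le (log (sin (π / 2 * t)))
        have := abs_nonneg (log (sin (π / 2 * t)))
        have : 0 ≤ log 4 := log_nonneg (by norm_num)
        rw [abs_le]; constructor <;> linarith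
      have hb : 0 ≤ 1 - t ^ 2 := by nlinarith
      rw [norm_mul, norm_neg, norm_mul, Real.norm_of_nonneg hb, Real.norm_eq_abs (log u),
        Real.norm_of_nonneg (by norm_num : (0:ℝ) ≤ 1 / 2)]
      have := abs_nonneg (log u)
      nlinarith
    · have h := (intervalIntegrable_log_sin (a := 0) (b := π / 2)).comp_mul_left (c := π / 2)
      have h2 : IntervalIntegrable (fun t => log (sin (π / 2 * t))) volume 0 1 := by
        simpa [Function.comp_def, pi_ne_zero] using h
      exact intervalIntegrable_const.add (h2.abs.const_mul 2)
    · refine Eventually.of_forall fun t ht => ?_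
      rw [Set.uIoc_of_le zero_le_one] at ht
      obtain ⟨ht0, ht1⟩ := ht
      have hs : 0 < sin (π * (t / 4)) :=
        sin_pos_of_pos_of_lt_pi (by positivity) (by nlinarith [pi_pos])
      have e : 1 - 2 * 1 * cos (π / 2 * t) + 1 ^ 2 = (2 * sin (π * (t / 4))) ^ 2 := by
        rw [show π / 2 * t = 2 * (π * (t / 4)) by ring, cos_two_mul']
        nlinarith [sin_sq_add_cos_sq (π * (t / 4))]
      have e2 : log (2 * sin (π * (t / 4))) = 1 / 2 * log (1 - 2 * 1 * cos (π / 2 * t) + 1 ^ 2) := by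
        rw [e, log_pow]; push_cast; ring
      rw [e2]
      have c : ContinuousAt (fun r : ℝ => 1 - 2 * r * cos (π / 2 * t) + r ^ 2) 1 := by fun_prop
      have c2 := c.log (by rw [e]; positivity)
      have := ((c2.tendsto.const_mul (1 / 2)).neg.const_mul (1 - t ^ 2)).mono_left
        (nhdsWithin_le_nhds (s := Set.Iio 1))
      exact this
  refine tendsto_nhds_unique T2 (T1.congr' ?_)
  filter_upwards [Ioo_mem_nhdsLT (zero_lt_one (α := ℝ))] with r hr
  exact (partD_r r hr.1.le hr.2).tsum_eq

lemma beta_hasSum : HasSum (fun j : ℕ => (-1 : ℝ) ^ j / (2 * (j : ℝ) + 1) ^ 4) (dirichletBeta 4) := by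
  apply Summable.hasSum
  refine Summable.of_norm_bounded (ZZ_summable 4 (by norm_num)) fun j => ?_
  rw [norm_div, norm_pow, norm_neg, norm_one, one_pow, Real.norm_of_nonneg (by positivity)]
  have : (0 : ℝ) ≤ j := j.cast_nonneg
  gcongr
  linarith

lemma eta_hasSum : HasSum (fun j : ℕ => (-1 : ℝ) ^ j / (j : ℝ) ^ 3) (-(3 / 4) * ZZ 3) := by
  have h := ZZ_hasSum' 3 (by norm_num)
  have he : HasSum (fun i : ℕ => 1 / ((2 * i : ℕ) : ℝ) ^ 3) (ZZ 3 / 8) := by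
    refine (h.div_const 8).congr_fun ?_ |> fun h => h
    intro i
    push_cast
    rw [mul_pow, div_div]
    norm_num
    ring
  have ho : Summable (fun i : ℕ => 1 / ((2 * i + 1 : ℕ) : ℝ) ^ 3) :=
    h.summable.comp_injective (i := fun i : ℕ => 2 * i + 1) (fun a b hab => by simpa using hab)
  have hoe := (he.even_add_odd (f := fun j : ℕ => 1 / (j : ℝ) ^ 3) ho.hasSum).unique h
  have e := HasSum.even_add_odd (f := fun j : ℕ => (-1 : ℝ) ^ j / (j : ℝ) ^ 3)
    (m := ZZ 3 / 8) (m' := -(∑' i : ℕ, 1 / ((2 * i + 1 : ℕ) : ℝ) ^ 3)) ?_ ?_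
  · convert e using 1
    linarith
  · convert he using 2 with i
    simp
  · refine ho.hasSum.neg.congr_fun ?_ |> fun h => h
    intro i
    rw [pow_succ, pow_mul]
    simp
    ring

lemma cc_sum : ∑' k : ℕ, cc k / k = 3 / (4 * π ^ 2) * ZZ 3 + 16 / π ^ 3 * dirichletBeta 4 := by
  apply HasSum.tsum_eq
  apply HasSum.even_add_odd
  · have h := eta_hasSum.mul_left (-(1 / π ^ 2))
    rw [show -(1 / π ^ 2) * (-(3 / 4) * ZZ 3) = 3 / (4 * π ^ 2) * ZZ 3 by ring] at h
    · refine h.congr_fun ?_ |> fun h => h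
      intro j
      have e : ((2 * j : ℕ) : ℝ) * (π / 2) = j * π := by push_cast; ring
      unfold cc
      rw [e, cos_nat_mul_pi, sin_nat_mul_pi]
      rcases Nat.eq_zero_or_pos j with rfl | hj
      · simp
      have : (j : ℝ) ≠ 0 := by positivity
      push_cast
      field_simp
      ring
  · have h := beta_hasSum.mul_left (16 / π ^ 3)
    refine h.congr_fun ?_ |> fun h => h
    intro j
    have e : ((2 * j + 1 : ℕ) : ℝ) * (π / 2) = j * π + π / 2 := by push_cast; ring
    have hs : sin (j * π + π / 2) = (-1) ^ j := by rw [sin_add_pi_div_two, cos_nat_mul_pi]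
    have hc : cos (j * π + π / 2) = 0 := by rw [cos_add_pi_div_two, sin_nat_mul_pi]; simp
    unfold cc
    rw [e, hs, hc, ← e]
    push_cast
    field_simp
    ring

lemma partE : 1 / 2 * ∫ t in (0:ℝ)..1, (1 - t ^ 2) * (log (π * (t / 4)) - log (sin (π * (t / 4)))) =
    3 * ZZ 3 / (8 * π ^ 2) + 8 * dirichletBeta 4 / π ^ 3 + (1 / 3) * log (π / 2) - 4 / 9 := by
  have i1 : IntervalIntegrable (fun t : ℝ => (1 - t ^ 2) * log t) volume 0 1 :=
    intervalIntegral.intervalIntegrable_log'.continuousOn_mul (by fun_prop)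
  have i2 : IntervalIntegrable (fun t : ℝ => (1 - t ^ 2) * log (π / 2)) volume 0 1 :=
    Continuous.intervalIntegrable (by fun_prop) _ _
  have i3 : IntervalIntegrable (fun t : ℝ => (1 - t ^ 2) * -(log (2 * sin (π * (t / 4)))))
      volume 0 1 := by
    have h := (intervalIntegrable_log_sin (a := 0) (b := π / 4)).comp_mul_left (c := π / 4)
    have h2 : IntervalIntegrable (fun t => log (sin (π / 4 * t))) volume 0 1 := by
      simpa [Function.comp_def, pi_ne_zero] using h
    have h3 : IntervalIntegrable (fun t => -(log 2 + log (sin (π / 4 * t)))) volume 0 1 :=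
      (intervalIntegrable_const.add h2).neg
    have h4 := h3.continuousOn_mul (g := fun t : ℝ => 1 - t ^ 2) (by fun_prop)
    refine h4.congr ?_
    intro t ht
    rw [Set.uIoc_of_le zero_le_one] at ht
    have hs : 0 < sin (π * (t / 4)) :=
      sin_pos_of_pos_of_lt_pi (by have := ht.1; positivity) (by nlinarith [pi_pos, ht.2])
    simp only
    rw [log_mul two_ne_zero hs.ne', show π / 4 * t = π * (t / 4) by ring]
  have e : ∫ t in (0:ℝ)..1, (1 - t ^ 2) * (log (π * (t / 4)) - log (sin (π * (t / 4)))) =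
      ∫ t in (0:ℝ)..1, ((1 - t ^ 2) * log t + (1 - t ^ 2) * log (π / 2)) +
        (1 - t ^ 2) * -(log (2 * sin (π * (t / 4)))) := by
    apply intervalIntegral.integral_congr_ae
    refine Eventually.of_forall fun t ht => ?_
    rw [Set.uIoc_of_le zero_le_one] at ht
    have ht0 : t ≠ 0 := ht.1.ne'
    have hs : 0 < sin (π * (t / 4)) :=
      sin_pos_of_pos_of_lt_pi (by have := ht.1; positivity) (by nlinarith [pi_pos, ht.2])
    rw [log_mul two_ne_zero hs.ne', show π * (t / 4) = t * (π / 2) / 2 by ring,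
      log_div (by positivity) two_ne_zero, log_mul ht0 (by positivity)]
    ring
  have i4 : ∫ t in (0:ℝ)..1, (1 - t ^ 2) * log (π / 2) = 2 / 3 * log (π / 2) := by
    rw [intervalIntegral.integral_mul_const, intervalIntegral.integral_sub (by simp) (by simp)]
    simp
    norm_num
  rw [e, intervalIntegral.integral_add (i1.add i2) i3, intervalIntegral.integral_add i1 i2,
    partC, partD, cc_sum, i4]
  ring

theorem stmt12 :
    ∑' n : ℕ, riemannZeta (2 * (n + 1)) /
        ((n + 1) * (2 * n + 3) * (2 * n + 5) * 16 ^ (n + 1)) =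
      3 * riemannZeta 3 / (8 * (π : ℂ) ^ 2) + 8 * (dirichletBeta 4 : ℂ) / (π : ℂ) ^ 3 +
        (1 / 3) * (Real.log (π / 2) : ℂ) - 4 / 9 := by
  have h := partB
  rw [partE] at h
  have h2 := (Complex.hasSum_ofReal.2 h).tsum_eq
  have z3 := ZZ_zeta 3 (by norm_num)
  push_cast at h2 z3
  rw [z3, ← h2]
  congr 1
  funext n
  have := ZZ_zeta (2 * (n + 1)) (by omega)
  push_cast at this
  rw [this]
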